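/- Let A1 ∈ ℍ^{m1×p}, B1 ∈ ℍ^{q1×n1}, C1 ∈ ℍ^{m1×n1}, A2 ∈ ℍ^{m2×m1}, B2 ∈ ℍ^{q2×q1}, C2 ∈ ℍ^{m2×q1}, A3 ∈ ℍ^{m2×p3}, B3 ∈ ℍ^{q2×n3}, C3 ∈ ℍ^{m2×n3} be quaternion matrices. Define A = R_{(A2 A1)} A2, B = R_{B1} L_{(R_{B3} B2)}, C = R_{(A2 A1)} A3, D = B2 L_{(R_{B3} B2)}, C4 = C2 + A2 R_{A1} C1 B1⁺ − R_{A3} C3 B3⁺ B2, E = R_{(A2 A1)} C4 L_{(R_{B3} B2)}, M = R_A C, N = D L_B. Then there exist quaternion matrices X ∈ ℍ^{p×n1}, Y ∈ ℍ^{m1×q1}, Z ∈ ℍ^{m2×q2}, W ∈ ℍ^{p3×n3} satisfying A1 X − Y B1 = C1, A2 Y − Z B2 = C2 and A3 W − Z B3 = C3 if and only if R_{A1} C1 L_{B1} = 0, R_{A2} C2 L_{B2} = 0, R_{A3} C3 L_{B3} = 0, R_M R_A E = 0, E L_B L_N = 0, R_A E L_D = 0, and R_C E L_B = 0. -/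

import Mathlib

open Matrix

noncomputable section

/-- `Mat a b` is the type of `a × b` matrices over the real quaternions. -/
abbrev Mat (a b : ℕ) := Matrix (Fin a) (Fin b) (Quaternion ℝ)

/-- `Ad` is a Moore–Penrose inverse of `A`: the four Penrose equations hold. -/
def IsMPInv {k l : Type*} [Fintype k] [Fintype l]
    (A : Matrix k l (Quaternion ℝ)) (Ad : Matrix l k (Quaternion ℝ)) : Prop :=
  A * Ad * A = A ∧ Ad * A * Ad = Ad ∧ (A * Ad)ᴴ = A * Ad ∧ (Ad * A)ᴴ = Ad * A

/-- The projector `L_A = I - A⁺ A`. -/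
def Lp {k l : Type*} [Fintype k] [Fintype l] [DecidableEq l]
    (A : Matrix k l (Quaternion ℝ)) (Ad : Matrix l k (Quaternion ℝ)) :
    Matrix l l (Quaternion ℝ) :=
  1 - Ad * A

/-- The projector `R_A = I - A A⁺`. -/
def Rp {k l : Type*} [Fintype k] [Fintype l] [DecidableEq k]
    (A : Matrix k l (Quaternion ℝ)) (Ad : Matrix l k (Quaternion ℝ)) :
    Matrix k k (Quaternion ℝ) :=
  1 - A * Ad


section helpers
variable {a b c d e f g h : ℕ}

theorem Rp_mul_self {A : Mat a b} {Ad : Mat b a} (hA : IsMPInv A Ad) : Rp A Ad * A = 0 := by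
  rw [Rp, Matrix.sub_mul, Matrix.one_mul, hA.1, sub_self]

theorem self_mul_Lp {A : Mat a b} {Ad : Mat b a} (hA : IsMPInv A Ad) : A * Lp A Ad = 0 := by
  rw [Lp, Matrix.mul_sub, Matrix.mul_one, ← Matrix.mul_assoc, hA.1, sub_self]

theorem Rp_zero {A : Mat a b} {Ad : Mat b a} {F : Mat a c} (hF : Rp A Ad * F = 0) :
    A * (Ad * F) = F := by
  rw [Rp, Matrix.sub_mul, Matrix.one_mul, sub_eq_zero, Matrix.mul_assoc] at hF
  exact hF.symm

theorem Lp_zero {A : Mat a b} {Ad : Mat b a} {F : Mat c b} (hF : F * Lp A Ad = 0) :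
    F * (Ad * A) = F := by
  rw [Lp, Matrix.mul_sub, Matrix.mul_one, sub_eq_zero] at hF
  exact hF.symm

/-- `R_A F L_B = 0` gives a solution of a Sylvester-type equation. -/
theorem sylv {A : Mat a b} {Ad : Mat b a} {B : Mat c d} {Bd : Mat d c} {F : Mat a d}
    (hF : Rp A Ad * F * Lp B Bd = 0) :
    A * (Ad * F) + Rp A Ad * F * Bd * B = F := by
  have h1 := Lp_zero hF
  rw [← Matrix.mul_assoc] at h1
  rw [h1, Rp, Matrix.sub_mul, Matrix.one_mul, Matrix.mul_assoc]
  abel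

theorem bk_suff {A : Mat a b} {Ad : Mat b a} (hA : IsMPInv A Ad)
    {B : Mat c d} {Bd : Mat d c} (hB : IsMPInv B Bd)
    {C : Mat a e} {Cd : Mat e a}
    {D : Mat f d} {Dd : Mat d f} {E : Mat a d}
    {M : Mat a e} {Md : Mat e a} (hM : M = Rp A Ad * C) (hMd : IsMPInv M Md)
    {N : Mat f d} {Nd : Mat d f} (hN : N = D * Lp B Bd)
    (h1 : Rp M Md * Rp A Ad * E = 0) (h2 : E * Lp B Bd * Lp N Nd = 0)
    (h3 : Rp A Ad * E * Lp D Dd = 0) (h4 : Rp C Cd * E * Lp B Bd = 0) :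
    ∃ (V : Mat b c) (T : Mat e f), A * V * B - C * T * D = E := by
  rw [Matrix.mul_assoc] at h1 h4
  have k1 := Rp_zero h1
  have k2 := Lp_zero h2
  have k3 := Lp_zero h3
  have k4 := Rp_zero h4
  obtain ⟨Y, hY⟩ : ∃ Y : Mat e f, Y = Md * (Rp A Ad * E) * Dd
      + (1 - Md * M) * (Cd * (E * Lp B Bd) * Nd) := ⟨_, rfl⟩
  have e1 : M * Y * D = Rp A Ad * E := by
    have z : M * (1 - Md * M) = 0 := self_mul_Lp hMd
    rw [hY, Matrix.mul_add, ← Matrix.mul_assoc M (1 - Md * M), z, Matrix.zero_mul, add_zero,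
      ← Matrix.mul_assoc M, k1, Matrix.mul_assoc, k3]
  have t1 : Md * (Rp A Ad * E) * Dd * N = Md * (Rp A Ad * E) * Lp B Bd := by
    rw [hN, ← Matrix.mul_assoc, Matrix.mul_assoc _ Dd D, Matrix.mul_assoc Md, k3]
  have t2 : C * (Cd * (E * Lp B Bd) * Nd) * N = E * Lp B Bd := by
    rw [← Matrix.mul_assoc C, k4, Matrix.mul_assoc, k2]
  have e2 : C * Y * N = E * Lp B Bd := by
    have t3 : M * (Cd * (E * Lp B Bd) * Nd) * N = Rp A Ad * (E * Lp B Bd) := by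
      rw [hM, Matrix.mul_assoc (Rp A Ad), Matrix.mul_assoc (Rp A Ad), t2]
    have t4 : Y * N = Md * (Rp A Ad * E) * Lp B Bd + (Cd * (E * Lp B Bd) * Nd) * N
        - Md * (M * (Cd * (E * Lp B Bd) * Nd) * N) := by
      rw [hY, Matrix.add_mul, t1, Matrix.sub_mul, Matrix.sub_mul, Matrix.one_mul]
      simp only [Matrix.mul_assoc]
      abel
    rw [Matrix.mul_assoc C, t4, t3, Matrix.mul_sub, Matrix.mul_add, ← Matrix.mul_assoc C _ N, t2]
    simp only [Matrix.mul_assoc]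
    abel
  have f1 : Rp A Ad * (E - C * Y * D) = 0 := by
    rw [Matrix.mul_sub, ← e1, hM]
    simp only [Matrix.mul_assoc]
    exact sub_self _
  have f2 : (E - C * Y * D) * Lp B Bd = 0 := by
    rw [Matrix.sub_mul, ← e2, hN]
    simp only [Matrix.mul_assoc]
    exact sub_self _
  refine ⟨Ad * (E - C * Y * D) * Bd, -Y, ?_⟩
  rw [← Matrix.mul_assoc A, Rp_zero f1, Matrix.mul_assoc, Lp_zero f2, Matrix.mul_neg,
    Matrix.neg_mul]
  abel

theorem bk_nec {A : Mat a b} {Ad : Mat b a} (hA : IsMPInv A Ad)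
    {B : Mat c d} {Bd : Mat d c} (hB : IsMPInv B Bd)
    {C : Mat a e} {Cd : Mat e a} (hC : IsMPInv C Cd)
    {D : Mat f d} {Dd : Mat d f} (hD : IsMPInv D Dd) {E : Mat a d}
    {M : Mat a e} {Md : Mat e a} (hM : M = Rp A Ad * C) (hMd : IsMPInv M Md)
    {N : Mat f d} {Nd : Mat d f} (hN : N = D * Lp B Bd) (hNd : IsMPInv N Nd)
    {V : Mat b c} {T : Mat e f} (hE : A * V * B - C * T * D = E) :
    Rp M Md * Rp A Ad * E = 0 ∧ E * Lp B Bd * Lp N Nd = 0 ∧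
        Rp A Ad * E * Lp D Dd = 0 ∧ Rp C Cd * E * Lp B Bd = 0 := by
  have e1 : Rp A Ad * E = - (M * (T * D)) := by
    rw [← hE, Matrix.mul_sub, ← Matrix.mul_assoc, ← Matrix.mul_assoc, Rp_mul_self hA, hM]
    simp [Matrix.mul_assoc]
  have e2 : E * Lp B Bd = - (C * T * N) := by
    rw [← hE, Matrix.sub_mul, Matrix.mul_assoc _ B, self_mul_Lp hB, hN]
    simp [Matrix.mul_assoc]
  refine ⟨?_, ?_, ?_, ?_⟩
  · rw [Matrix.mul_assoc, e1, Matrix.mul_neg, ← Matrix.mul_assoc, Rp_mul_self hMd]; simp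
  · rw [e2, Matrix.neg_mul, Matrix.mul_assoc, self_mul_Lp hNd]; simp
  · rw [e1, Matrix.neg_mul, Matrix.mul_assoc, Matrix.mul_assoc, self_mul_Lp hD]; simp
  · rw [Matrix.mul_assoc, e2, Matrix.mul_neg, ← Matrix.mul_assoc, ← Matrix.mul_assoc,
      Rp_mul_self hC]; simp

/-- Necessity for a single equation. -/
theorem single_nec {A : Mat a b} {Ad : Mat b a} (hA : IsMPInv A Ad)
    {B : Mat c d} {Bd : Mat d c} (hB : IsMPInv B Bd) {X : Mat b d} {Y : Mat a c} {F : Mat a d}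
    (h : A * X - Y * B = F) : Rp A Ad * F * Lp B Bd = 0 := by
  rw [← h, Matrix.mul_sub, ← Matrix.mul_assoc, Rp_mul_self hA, Matrix.sub_mul,
    Matrix.mul_assoc _ (Y * B), Matrix.mul_assoc Y, self_mul_Lp hB]
  simp

end helpers

theorem stmt_16 {m1 p q1 n1 m2 q2 p3 n3 : ℕ}
    (A1 : Mat m1 p) (A1d : Mat p m1) (hA1 : IsMPInv A1 A1d)
    (B1 : Mat q1 n1) (B1d : Mat n1 q1) (hB1 : IsMPInv B1 B1d)
    (C1 : Mat m1 n1)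
    (A2 : Mat m2 m1) (A2d : Mat m1 m2) (hA2 : IsMPInv A2 A2d)
    (B2 : Mat q2 q1) (B2d : Mat q1 q2) (hB2 : IsMPInv B2 B2d)
    (C2 : Mat m2 q1)
    (A3 : Mat m2 p3) (A3d : Mat p3 m2) (hA3 : IsMPInv A3 A3d)
    (B3 : Mat q2 n3) (B3d : Mat n3 q2) (hB3 : IsMPInv B3 B3d)
    (C3 : Mat m2 n3)
    (A21 : Mat m2 p) (hA21 : A21 = A2 * A1)
    (A21d : Mat p m2) (hA21d : IsMPInv A21 A21d)
    (RB2 : Mat q2 q1) (hRB2 : RB2 = Rp B3 B3d * B2)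
    (RB2d : Mat q1 q2) (hRB2d : IsMPInv RB2 RB2d)
    (A : Mat m2 m1) (hA : A = Rp A21 A21d * A2)
    (Ad : Mat m1 m2) (hAd : IsMPInv A Ad)
    (B : Mat q1 q1) (hB : B = Rp B1 B1d * Lp RB2 RB2d)
    (Bd : Mat q1 q1) (hBd : IsMPInv B Bd)
    (C : Mat m2 p3) (hC : C = Rp A21 A21d * A3)
    (Cd : Mat p3 m2) (hCd : IsMPInv C Cd)
    (D : Mat q2 q1) (hD : D = B2 * Lp RB2 RB2d)
    (Dd : Mat q1 q2) (hDd : IsMPInv D Dd)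
    (C4 : Mat m2 q1)
    (hC4 : C4 = C2 + A2 * Rp A1 A1d * C1 * B1d - Rp A3 A3d * C3 * B3d * B2)
    (E : Mat m2 q1) (hE : E = Rp A21 A21d * C4 * Lp RB2 RB2d)
    (MM : Mat m2 p3) (hMM : MM = Rp A Ad * C)
    (MMd : Mat p3 m2) (hMMd : IsMPInv MM MMd)
    (NN : Mat q2 q1) (hNN : NN = D * Lp B Bd)
    (NNd : Mat q1 q2) (hNNd : IsMPInv NN NNd) :
    (∃ (X : Mat p n1) (Y : Mat m1 q1) (Z : Mat m2 q2) (W : Mat p3 n3),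
        A1 * X - Y * B1 = C1 ∧ A2 * Y - Z * B2 = C2 ∧ A3 * W - Z * B3 = C3) ↔
      (Rp A1 A1d * C1 * Lp B1 B1d = 0 ∧ Rp A2 A2d * C2 * Lp B2 B2d = 0 ∧
        Rp A3 A3d * C3 * Lp B3 B3d = 0 ∧
        Rp MM MMd * Rp A Ad * E = 0 ∧ E * Lp B Bd * Lp NN NNd = 0 ∧
        Rp A Ad * E * Lp D Dd = 0 ∧ Rp C Cd * E * Lp B Bd = 0) := by
  constructor
  · rintro ⟨X, Y, Z, W, h1, h2, h3⟩
    refine ⟨single_nec hA1 hB1 h1, single_nec hA2 hB2 h2, single_nec hA3 hB3 h3, ?_⟩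
    refine bk_nec hAd hBd hCd hDd hMM hMMd hNN hNNd (V := Y) (T := A3d * Z * B3 * B3d) ?_
    have g1 : Rp A1 A1d * C1 = - (Rp A1 A1d * (Y * B1)) := by
      rw [← h1, Matrix.mul_sub, ← Matrix.mul_assoc, Rp_mul_self hA1]; simp
    have g3 : Rp A3 A3d * C3 = - (Rp A3 A3d * (Z * B3)) := by
      rw [← h3, Matrix.mul_sub, ← Matrix.mul_assoc, Rp_mul_self hA3]; simp
    have k1 : Rp A21 A21d * A2 * A1 = 0 := by
      rw [Matrix.mul_assoc, ← hA21, Rp_mul_self hA21d]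
    have k2 : Rp B3 B3d * B2 * Lp RB2 RB2d = 0 := by
      rw [← hRB2, self_mul_Lp hRB2d]
    have c4 : C4 = A2 * (Y * Rp B1 B1d) + A2 * A1 * (A1d * Y * B1 * B1d)
        - Z * (Rp B3 B3d * B2) - A3 * (A3d * Z * B3 * B3d) * B2 := by
      rw [hC4, Matrix.mul_assoc A2, g1, g3, ← h2]
      simp only [Rp, Matrix.mul_assoc, Matrix.mul_sub, Matrix.sub_mul, Matrix.mul_one,
        Matrix.one_mul, Matrix.mul_neg, Matrix.neg_mul]
      abel
    rw [hE, c4, hA, hB, hC, hD]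
    generalize Rp A21 A21d = R at *
    generalize Lp RB2 RB2d = L at *
    generalize Rp B3 B3d = R3 at *
    have k1' : R * (A2 * (A1 * (A1d * (Y * (B1 * (B1d * L)))))) = 0 := by
      rw [← Matrix.mul_assoc A2, ← Matrix.mul_assoc R, ← Matrix.mul_assoc R A2, k1,
        Matrix.zero_mul]
    have k2' : R3 * (B2 * L) = 0 := by rw [← Matrix.mul_assoc, k2]
    simp only [Matrix.mul_assoc, Matrix.mul_sub, Matrix.sub_mul, Matrix.mul_add, Matrix.add_mul,
      k1', k2', Matrix.mul_zero, add_zero, sub_zero]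
  · rintro ⟨h1, -, h3, h4, h5, h6, h7⟩
    obtain ⟨V, T, hVT⟩ := bk_suff hAd hBd hMM hMMd hNN h4 h5 h6 h7
    obtain ⟨K, hK⟩ : ∃ K, K = C4 - A2 * V * Rp B1 B1d + A3 * T * B2 := ⟨_, rfl⟩
    have hK0 : Rp A21 A21d * K * Lp RB2 RB2d = 0 := by
      have : Rp A21 A21d * K * Lp RB2 RB2d = E - (A * V * B - C * T * D) := by
        rw [hK, hE, hA, hB, hC, hD]
        simp only [Matrix.mul_assoc, Matrix.mul_sub, Matrix.sub_mul, Matrix.mul_add,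
          Matrix.add_mul]
        abel
      rw [this, hVT, sub_self]
    have s1 := sylv h1
    have s3 := sylv h3
    have sK := sylv hK0
    have z1 : Rp B1 B1d * B1 = 0 := Rp_mul_self hB1
    have z3 : Rp B3 B3d * B3 = 0 := Rp_mul_self hB3
    obtain ⟨S, hS⟩ : ∃ S, S = A21d * K := ⟨_, rfl⟩
    obtain ⟨U, hU⟩ : ∃ U, U = Rp A21 A21d * K * RB2d := ⟨_, rfl⟩
    rw [← hS, ← hU, hA21, hRB2, hK, hC4] at sK
    refine ⟨A1d * C1 + S * B1, -(Rp A1 A1d * C1 * B1d) + A1 * S + V * Rp B1 B1d,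
      -(Rp A3 A3d * C3 * B3d) + A3 * T - U * Rp B3 B3d, A3d * C3 + T * B3, ?_, ?_, ?_⟩
    · nth_rewrite 3 [← s1]
      rw [Matrix.add_mul _ _ B1, Matrix.mul_assoc V, z1]
      simp only [Matrix.mul_assoc, Matrix.mul_add, Matrix.add_mul, Matrix.neg_mul,
        Matrix.mul_zero]
      abel
    · simp only [Matrix.mul_assoc, Matrix.mul_add, Matrix.add_mul, Matrix.neg_mul,
        Matrix.mul_neg, Matrix.sub_mul] at sK ⊢
      rw [← sub_eq_zero] at sK ⊢
      rw [← sK]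
      abel
    · nth_rewrite 3 [← s3]
      rw [Matrix.sub_mul _ _ B3, Matrix.mul_assoc U, z3]
      simp only [Matrix.mul_assoc, Matrix.mul_add, Matrix.add_mul, Matrix.neg_mul,
        Matrix.mul_zero]
      abel
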